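/- arXiv:1907.05999 — 2 statements merged into one kernel-verified Lean document; each statement's English description precedes it below -/
import Mathlib

section
/- Let U ⊆ V be a subspace with dim U = 3, U^⊥ ⊆ U ∩ σU, and σU ≠ U. Then U ∩ σU is 2-dimensional, U ∩ σU = U^⊥ + σ(U^⊥), and (U ∩ σU)^⊥ = U ∩ σU (so U ∩ σU is a totally isotropic plane). -/
noncomputable section

variable (p : ℕ) [Fact p.Prime]
variable (𝔽 : Type) [Field 𝔽] [IsAlgClosed 𝔽] [CharP 𝔽 p]

/-- The symplectic form on `V = 𝔽⁴` (base changed from the standard form over `𝔽_p`). -/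
def omegaF (x y : Fin 4 → 𝔽) : 𝔽 :=
  x 0 * y 3 - x 3 * y 0 + x 1 * y 2 - x 2 * y 1

/-- The `p`-semilinear Frobenius `σ` on `V = V₀ ⊗ 𝔽 = 𝔽⁴` (acting as `c ↦ c^p`
on the coordinates with respect to the fixed `𝔽_p`-rational basis). -/
def frobV (x : Fin 4 → 𝔽) : Fin 4 → 𝔽 := fun i => (x i) ^ p

/-- The orthogonal complement `U^⊥` with respect to `ω`. -/
def perp (U : Submodule 𝔽 (Fin 4 → 𝔽)) : Submodule 𝔽 (Fin 4 → 𝔽) where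
  carrier := {x | ∀ u ∈ U, omegaF 𝔽 x u = 0}
  zero_mem' := by
    intro u hu
    simp [omegaF]
  add_mem' := by
    intro x y hx hy u hu
    have h : omegaF 𝔽 (x + y) u = omegaF 𝔽 x u + omegaF 𝔽 y u := by
      simp [omegaF]; ring
    rw [h, hx u hu, hy u hu, add_zero]
  smul_mem' := by
    intro c x hx u hu
    have h : omegaF 𝔽 (c • x) u = c * omegaF 𝔽 x u := by
      simp [omegaF]; ring
    rw [h, hx u hu, mul_zero]

/-- The image `σU` of a subspace `U` under the Frobenius `σ` (an `𝔽`-subspace since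
`𝔽` is perfect). -/
def sigL (U : Submodule 𝔽 (Fin 4 → 𝔽)) : Submodule 𝔽 (Fin 4 → 𝔽) :=
  Submodule.span 𝔽 (frobV p 𝔽 '' U)

/-! Since `σ` is a semilinear isometry, `σ(U^⊥) = (σU)^⊥`, so `(U ∩ σU)^⊥ = U^⊥ + σ(U^⊥)`. Applying
`σ` to `U^⊥ ⊆ U` gives `σ(U^⊥) ⊆ σU`, and dualizing `U^⊥ ⊆ σU` gives `σ(U^⊥) ⊆ U`; hence `U ∩ σU`
contains its own orthogonal. Distinct hyperplanes meet in codimension 2, which in dimension 4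
leaves no room for this containment to be strict. -/

section Hyperplanes

variable {K V : Type*} [DivisionRing K] [AddCommGroup V] [Module K V] [FiniteDimensional K V]

theorem finrank_inf_add_two_of_ne {U W : Submodule K V}
    (hU : Module.finrank K U + 1 = Module.finrank K V)
    (hW : Module.finrank K W + 1 = Module.finrank K V) (hne : U ≠ W) :
    Module.finrank K ↥(U ⊓ W) + 2 = Module.finrank K V := by
  have hlt : U < U ⊔ W := left_lt_sup.2 fun hWU =>
    hne (Submodule.eq_of_le_of_finrank_eq hWU (by omega)).symm
  have hsup_gt := Submodule.finrank_lt_finrank_of_lt hlt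
  have hsup_le := Submodule.finrank_le (U ⊔ W)
  have hsum := Submodule.finrank_sup_add_finrank_inf_eq U W
  omega

end Hyperplanes

section Orthogonal

variable {K V : Type*} [Field K] [AddCommGroup V] [Module K V] [FiniteDimensional K V]
variable {B : LinearMap.BilinForm K V}

theorem orthogonal_le_comm (hB : B.Nondegenerate) (hB₀ : B.IsRefl) {U W : Submodule K V} :
    B.orthogonal U ≤ W ↔ B.orthogonal W ≤ U := by
  have swap (U W : Submodule K V) (h : B.orthogonal U ≤ W) : B.orthogonal W ≤ U :=
    (LinearMap.BilinForm.orthogonal_le h).trans_eq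
      (LinearMap.BilinForm.orthogonal_orthogonal hB hB₀ U)
  exact ⟨swap U W, swap W U⟩

theorem orthogonal_inf_eq_sup (hB : B.Nondegenerate) (hB₀ : B.IsRefl) (U W : Submodule K V) :
    B.orthogonal (U ⊓ W) = B.orthogonal U ⊔ B.orthogonal W := by
  apply le_antisymm
  · rw [orthogonal_le_comm hB hB₀]
    exact le_inf ((orthogonal_le_comm hB hB₀).1 le_sup_left)
      ((orthogonal_le_comm hB hB₀).1 le_sup_right)
  · exact sup_le (LinearMap.BilinForm.orthogonal_le inf_le_left)
      (LinearMap.BilinForm.orthogonal_le inf_le_right)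

theorem orthogonal_inf_le_inf (hB : B.Nondegenerate) (hB₀ : B.IsRefl) {U W : Submodule K V}
    (hU : B.orthogonal U ≤ U) (hW : B.orthogonal W ≤ W) (hUW : B.orthogonal U ≤ W) :
    B.orthogonal (U ⊓ W) ≤ U ⊓ W := by
  rw [orthogonal_inf_eq_sup hB hB₀]
  exact sup_le (le_inf hU hUW) (le_inf ((orthogonal_le_comm hB hB₀).1 hUW) hW)

theorem orthogonal_eq_self_of_le (hB : B.Nondegenerate) {U : Submodule K V}
    (hU : B.orthogonal U ≤ U) (hdim : 2 * Module.finrank K U = Module.finrank K V) :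
    B.orthogonal U = U := by
  refine Submodule.eq_of_le_of_finrank_eq hU ?_
  rw [LinearMap.BilinForm.finrank_orthogonal hB]
  omega

end Orthogonal

section Semilinear

theorem finrank_map_eq_of_injective {K L V W : Type*} [DivisionRing K] [DivisionRing L]
    [AddCommGroup V] [Module K V] [AddCommGroup W] [Module L W] {τ : K →+* L}
    [RingHomSurjective τ] {σ : V →ₛₗ[τ] W} (hσ : Function.Injective σ) (U : Submodule K V) :
    Module.finrank L (U.map σ) = Module.finrank K U := by
  simp only [Module.finrank_eq_spanFinrank_of_free, Submodule.spanFinrank_top,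
    Submodule.spanFinrank_map_eq_of_injective σ hσ]

variable {R S M N : Type*} [CommRing R] [CommRing S] [AddCommGroup M] [Module R M]
  [AddCommGroup N] [Module S N] {τ : R →+* S} {σ : M →ₛₗ[τ] N}
  {B : LinearMap.BilinForm R M} {B' : LinearMap.BilinForm S N}

theorem injective_of_semilinear_isometry (hτ : Function.Injective τ) (hB : B.SeparatingLeft)
    (hσ : ∀ x y, B' (σ x) (σ y) = τ (B x y)) : Function.Injective σ := by
  refine (injective_iff_map_eq_zero σ).2 fun x hx => hB x fun y => hτ ?_
  rw [← hσ, hx, map_zero, map_zero, LinearMap.zero_apply]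

theorem map_orthogonal_of_semilinear_isometry [RingHomSurjective τ] (hτ : Function.Injective τ)
    (hσ : ∀ x y, B' (σ x) (σ y) = τ (B x y)) (hsurj : Function.Surjective σ)
    (U : Submodule R M) : (B.orthogonal U).map σ = B'.orthogonal (U.map σ) := by
  have isOrtho_map_iff (x y : M) : B' (σ x) (σ y) = 0 ↔ B x y = 0 := by
    rw [hσ, map_eq_zero_iff τ hτ]
  apply le_antisymm
  · rintro _ ⟨x, hx, rfl⟩ _ ⟨u, hu, rfl⟩
    exact (isOrtho_map_iff u x).2 (hx u hu)
  · intro y hy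
    obtain ⟨x, rfl⟩ := hsurj y
    exact ⟨x, fun u hu => (isOrtho_map_iff u x).1 (hy (σ u) ⟨u, hu, rfl⟩), rfl⟩

end Semilinear

theorem intersection_with_frobenius_translate_general {K V : Type*} [Field K] [AddCommGroup V]
    [Module K V] (hV : Module.finrank K V = 4) {B : LinearMap.BilinForm K V}
    (hB : B.Nondegenerate) (hB₀ : B.IsRefl) {τ : K →+* K} [RingHomSurjective τ]
    {σ : V →ₛₗ[τ] V} (hσ : ∀ x y, B (σ x) (σ y) = τ (B x y)) {U : Submodule K V}
    (hdim : Module.finrank K U = 3) (hperp : B.orthogonal U ≤ U ⊓ U.map σ)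
    (hne : U.map σ ≠ U) :
    Module.finrank K ↥(U ⊓ U.map σ) = 2 ∧
    U ⊓ U.map σ = B.orthogonal U ⊔ (B.orthogonal U).map σ ∧
    B.orthogonal (U ⊓ U.map σ) = U ⊓ U.map σ := by
  have : FiniteDimensional K V := Module.finite_of_finrank_pos (by omega)
  obtain ⟨hU, hUσ⟩ := le_inf_iff.1 hperp
  have hinj : Function.Injective σ := injective_of_semilinear_isometry τ.injective hB.1 hσ
  have hsurj : Function.Surjective σ := LinearMap.range_eq_top.1 <|
    Submodule.eq_top_of_finrank_eq <| by
      rw [LinearMap.range_eq_map, finrank_map_eq_of_injective hinj, finrank_top]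
  have hmap : (B.orthogonal U).map σ = B.orthogonal (U.map σ) :=
    map_orthogonal_of_semilinear_isometry τ.injective hσ hsurj U
  have hfinrank : Module.finrank K ↥(U ⊓ U.map σ) = 2 := by
    have hcodim := finrank_inf_add_two_of_ne (by omega)
      (by rw [finrank_map_eq_of_injective hinj]; omega) hne.symm
    omega
  have hself : B.orthogonal (U ⊓ U.map σ) = U ⊓ U.map σ :=
    orthogonal_eq_self_of_le hB
      (orthogonal_inf_le_inf hB hB₀ hU (hmap ▸ Submodule.map_mono hU) hUσ) (by omega)
  exact ⟨hfinrank, by rw [hmap, ← orthogonal_inf_eq_sup hB hB₀, hself], hself⟩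

section Coordinates

variable (K : Type) [Field K]

/-- The form `ω` of `omegaF`, bundled as a bilinear form so that the orthogonality theory of
bilinear forms applies to it. -/
def omegaBilin : LinearMap.BilinForm K (Fin 4 → K) :=
  LinearMap.mk₂ K (omegaF K)
    (by intro x y z; simp only [omegaF, Pi.add_apply]; ring)
    (by intro c x y; simp only [omegaF, Pi.smul_apply, smul_eq_mul]; ring)
    (by intro x y z; simp only [omegaF, Pi.add_apply]; ring)
    (by intro c x y; simp only [omegaF, Pi.smul_apply, smul_eq_mul]; ring)

theorem omegaBilin_isAlt : (omegaBilin K).IsAlt := by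
  intro x
  change omegaF K x x = 0
  simp only [omegaF]
  ring

theorem omegaBilin_nondegenerate : (omegaBilin K).Nondegenerate := by
  refine (omegaBilin_isAlt K).isRefl.nondegenerate_iff_separatingLeft.2 fun x hx => ?_
  have apply_single (i : Fin 4) : omegaF K x (Pi.single i 1) = 0 := hx _
  ext i
  fin_cases i
  · simpa [omegaF] using apply_single 3
  · simpa [omegaF] using apply_single 2
  · simpa [omegaF] using apply_single 1
  · simpa [omegaF] using apply_single 0

theorem perp_eq_orthogonal (U : Submodule K (Fin 4 → K)) :
    perp K U = (omegaBilin K).orthogonal U := by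
  ext x
  exact forall₂_congr fun u _ => (omegaBilin_isAlt K).isRefl.eq_iff

variable [CharP K p]

/-- The Frobenius `σ` of `frobV`, bundled as a map semilinear over `c ↦ c ^ p`. -/
def frobSemilinear : (Fin 4 → K) →ₛₗ[frobenius K p] (Fin 4 → K) where
  toFun := frobV p K
  map_add' x y := funext fun i => add_pow_char (x i) (y i) p
  map_smul' c x := funext fun i => mul_pow c (x i) p

instance ringHomSurjective_frobenius [PerfectRing K p] : RingHomSurjective (frobenius K p) :=
  ⟨surjective_frobenius K p⟩

theorem sigL_eq_map [PerfectRing K p] (U : Submodule K (Fin 4 → K)) :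
    sigL p K U = U.map (frobSemilinear p K) :=
  Submodule.span_eq (U.map (frobSemilinear p K))

theorem omegaBilin_frobSemilinear (x y : Fin 4 → K) :
    omegaBilin K (frobSemilinear p K x) (frobSemilinear p K y) =
      frobenius K p (omegaBilin K x y) := by
  change omegaF K (fun i => frobenius K p (x i)) (fun i => frobenius K p (y i)) =
    frobenius K p (omegaF K x y)
  simp only [omegaF, map_sub, map_add, map_mul]

end Coordinates

/-- Let `U ⊆ V` be a subspace with `dim U = 3`,
`U^⊥ ⊆ U ∩ σU` and `σU ≠ U`. Then `U ∩ σU` is 2-dimensional,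
`U ∩ σU = U^⊥ + σ(U^⊥)`, and `(U ∩ σU)^⊥ = U ∩ σU`. -/
theorem intersection_with_frobenius_translate
    (p : ℕ) [Fact p.Prime]
    (𝔽 : Type) [Field 𝔽] [IsAlgClosed 𝔽] [CharP 𝔽 p]
    (U : Submodule 𝔽 (Fin 4 → 𝔽))
    (hdim : Module.finrank 𝔽 U = 3)
    (hperp : perp 𝔽 U ≤ U ⊓ sigL p 𝔽 U)
    (hne : sigL p 𝔽 U ≠ U) :
    Module.finrank 𝔽 ↥(U ⊓ sigL p 𝔽 U) = 2 ∧
    U ⊓ sigL p 𝔽 U = perp 𝔽 U ⊔ sigL p 𝔽 (perp 𝔽 U) ∧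
    perp 𝔽 (U ⊓ sigL p 𝔽 U) = U ⊓ sigL p 𝔽 U := by
  simp only [sigL_eq_map, perp_eq_orthogonal] at hperp hne
  rw [perp_eq_orthogonal, perp_eq_orthogonal, sigL_eq_map, sigL_eq_map]
  exact intersection_with_frobenius_translate_general (Module.finrank_fin_fun 𝔽)
    (omegaBilin_nondegenerate 𝔽) (omegaBilin_isAlt 𝔽).isRefl (omegaBilin_frobSemilinear p 𝔽)
    hdim hperp hne

end
end

section
/- Let x ∈ V be a nonzero vector with ω(x, σx) = 0 and σx ∉ 𝔽x. Then the plane spanned by x and σx is σ-stable if and only if ω(x, σ²x) = 0. -/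
noncomputable section

variable (p : ℕ) [Fact p.Prime]
variable (𝔽 : Type) [Field 𝔽] [IsAlgClosed 𝔽] [CharP 𝔽 p]

/-!
Frobenius preserves the dimension of subspaces, so the plane `W = ⟨x, σx⟩` is `σ`-stable as soon as
`σW ⊆ W`, that is, as soon as `σ²x ∈ W`. Since `ω(x, σx) = 0`, the plane is Lagrangian, so
`σ²x ∈ W` means that `σ²x` is orthogonal to both `x` and `σx`; the second condition is automatic,
as `ω(σx, σ²x) = ω(x, σx)^p = 0`. When `x` and `σx` are dependent, `W` is always `σ`-stable and
`ω(x, σ²x)` always vanishes.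
-/

open Module Submodule
open scoped Matrix

section LinearIndependentRows

variable {m n : Type*}

theorem exists_mul_eq_one_of_linearIndependent_row {K : Type*} [Field K] [Finite m]
    [DecidableEq m] [Fintype n] {A : Matrix m n K} (hA : LinearIndependent K A.row) :
    ∃ B : Matrix n m K, A * B = 1 := by
  cases nonempty_fintype m
  have hrange : finrank K (LinearMap.range A.mulVecLin) = finrank K (m → K) := by
    rw [finrank_fintype_fun_eq_card, ← hA.rank_matrix, Matrix.rank]
  have hsurj : Function.Surjective A.mulVec :=
    LinearMap.range_eq_top.1 (eq_top_of_finrank_eq hrange)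
  exact Matrix.mulVec_surjective_iff_exists_right_inverse.1 hsurj

theorem linearIndependent_row_of_mul_eq_one {R : Type*} [Semiring R] [Finite m] [DecidableEq m]
    [Fintype n] {A : Matrix m n R} {B : Matrix n m R} (hAB : A * B = 1) :
    LinearIndependent R A.row := by
  cases nonempty_fintype m
  have hinv : Function.LeftInverse B.vecMul A.vecMul := fun v => by
    change (v ᵥ* A) ᵥ* B = v
    rw [Matrix.vecMul_vecMul, hAB, Matrix.vecMul_one]
  exact Matrix.vecMul_injective_iff.1 hinv.injective

theorem linearIndependent_row_map {K R : Type*} [Field K] [Semiring R] [Finite m] [Finite n]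
    (φ : K →+* R) {A : Matrix m n K} (hA : LinearIndependent K A.row) :
    LinearIndependent R (A.map φ).row := by
  classical
  cases nonempty_fintype n
  obtain ⟨B, hAB⟩ := exists_mul_eq_one_of_linearIndependent_row hA
  apply linearIndependent_row_of_mul_eq_one (B := B.map φ)
  rw [← Matrix.map_mul, hAB, Matrix.map_one φ φ.map_zero φ.map_one]

end LinearIndependentRows

section Orthogonal

variable {R M : Type*} [CommRing R] [AddCommGroup M] [Module R M] {B : LinearMap.BilinForm R M}

theorem mem_orthogonal_span_pair {x y z : M} :
    z ∈ B.orthogonal (span R {x, y}) ↔ B x z = 0 ∧ B y z = 0 := by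
  constructor
  · intro hz
    exact ⟨hz x (subset_span (by simp)), hz y (subset_span (by simp))⟩
  · rintro ⟨hxz, hyz⟩ w hw
    obtain ⟨a, b, rfl⟩ := mem_span_pair.1 hw
    simp [hxz, hyz]

theorem span_pair_le_orthogonal (hB : B.IsAlt) {x y : M} (hxy : B x y = 0) :
    span R {x, y} ≤ B.orthogonal (span R {x, y}) := by
  have hyx : B y x = 0 := hB.isRefl x y hxy
  rw [span_le]
  rintro z (rfl | rfl)
  · exact mem_orthogonal_span_pair.2 ⟨hB z, hyx⟩
  · exact mem_orthogonal_span_pair.2 ⟨hxy, hB z⟩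

end Orthogonal

section Lagrangian

variable {K V : Type*} [Field K] [AddCommGroup V] [Module K V] {B : LinearMap.BilinForm K V}

theorem orthogonal_eq_self_of_le_of_finrank [FiniteDimensional K V] (hB : B.Nondegenerate)
    {W : Submodule K V} (hW : W ≤ B.orthogonal W) (hdim : finrank K V = 2 * finrank K W) :
    B.orthogonal W = W := by
  refine (eq_of_le_of_finrank_eq hW ?_).symm
  rw [LinearMap.BilinForm.finrank_orthogonal hB]
  lia

theorem mem_span_pair_iff_of_isAlt (hB : B.IsAlt) (hB' : B.Nondegenerate)
    (hV : finrank K V = 4) {x y : V} (hli : LinearIndependent K ![x, y]) (hxy : B x y = 0)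
    {z : V} : z ∈ span K {x, y} ↔ B x z = 0 ∧ B y z = 0 := by
  have : FiniteDimensional K V := FiniteDimensional.of_finrank_pos (by lia)
  have hW : finrank K (span K {x, y}) = 2 := by
    rw [← Matrix.range_cons_cons_empty x y ![], finrank_span_eq_card hli, Fintype.card_fin]
  rw [← mem_orthogonal_span_pair,
    orthogonal_eq_self_of_le_of_finrank hB' (span_pair_le_orthogonal hB hxy) (by lia)]

end Lagrangian

section SymplecticForm

variable (K : Type) [Field K]

/-- The symplectic form `omegaF` as a bundled bilinear form, so that the theory of orthogonal
complements applies to it. -/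
def omegaForm : LinearMap.BilinForm K (Fin 4 → K) :=
  LinearMap.mk₂ K (omegaF K)
    (fun x x' y => by simp only [omegaF, Pi.add_apply]; ring)
    (fun c x y => by simp only [omegaF, Pi.smul_apply, smul_eq_mul]; ring)
    (fun x y y' => by simp only [omegaF, Pi.add_apply]; ring)
    (fun c x y => by simp only [omegaF, Pi.smul_apply, smul_eq_mul]; ring)

@[simp]
theorem omegaForm_apply (x y : Fin 4 → K) : omegaForm K x y = omegaF K x y :=
  rfl

theorem isAlt_omegaForm : (omegaForm K).IsAlt := by
  intro x
  simp only [omegaForm_apply, omegaF]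
  ring

theorem nondegenerate_omegaForm : (omegaForm K).Nondegenerate := by
  refine (isAlt_omegaForm K).isRefl.nondegenerate_iff_separatingLeft.2 ?_
  intro x hx
  have hcoord (i : Fin 4) : omegaF K x (Pi.single i 1) = 0 := hx (Pi.single i 1)
  ext i
  fin_cases i
  · simpa [omegaF] using hcoord 3
  · simpa [omegaF] using hcoord 2
  · simpa [omegaF] using hcoord 1
  · simpa [omegaF] using hcoord 0

end SymplecticForm

section Frobenius

variable (p : ℕ) (K : Type) [Field K] [ExpChar K p]

/-- The Frobenius `frobV` of `K⁴` as a bundled semilinear map over the Frobenius of `K`. -/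
def frobVSemilinear : (Fin 4 → K) →ₛₗ[frobenius K p] (Fin 4 → K) where
  toFun := frobV p K
  map_add' x y := funext fun i => add_pow_expChar (x i) (y i) p
  map_smul' c x := funext fun i => mul_pow c (x i) p

theorem frobV_smul (c : K) (x : Fin 4 → K) : frobV p K (c • x) = c ^ p • frobV p K x :=
  (frobVSemilinear p K).map_smulₛₗ c x

theorem omegaF_frobV (x y : Fin 4 → K) :
    omegaF K (frobV p K x) (frobV p K y) = omegaF K x y ^ p := by
  simp only [omegaF, frobV, add_pow_expChar, sub_pow_expChar, mul_pow]

theorem linearIndependent_frobV {ι : Type*} [Finite ι] {v : ι → Fin 4 → K}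
    (hv : LinearIndependent K v) : LinearIndependent K (frobV p K ∘ v) :=
  linearIndependent_row_map (frobenius K p) (A := Matrix.of v) hv

theorem sigL_span (s : Set (Fin 4 → K)) : sigL p K (span K s) = span K (frobV p K '' s) :=
  le_antisymm (span_le.2 (image_span_subset_span (frobVSemilinear p K) s))
    (span_mono (Set.image_mono subset_span))

theorem finrank_sigL (U : Submodule K (Fin 4 → K)) : finrank K (sigL p K U) = finrank K U := by
  let b := finBasis K U
  have hb : span K (Set.range (U.subtype ∘ b)) = U := by
    rw [Set.range_comp, ← map_span, b.span_eq, map_subtype_top]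
  have hli : LinearIndependent K (U.subtype ∘ b) :=
    b.linearIndependent.map' U.subtype U.ker_subtype
  calc finrank K (sigL p K U)
      = finrank K (span K (Set.range (frobV p K ∘ U.subtype ∘ b))) := by
        rw [Set.range_comp, ← sigL_span, hb]
    _ = finrank K U := by
        rw [finrank_span_eq_card (linearIndependent_frobV p K hli), Fintype.card_fin]

theorem sigL_eq_self_iff_le {U : Submodule K (Fin 4 → K)} : sigL p K U = U ↔ sigL p K U ≤ U :=
  ⟨le_of_eq, fun hU => eq_of_le_of_finrank_eq hU (finrank_sigL p K U)⟩

theorem sigL_span_pair_frobV_le_iff {x : Fin 4 → K} :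
    sigL p K (span K {x, frobV p K x}) ≤ span K {x, frobV p K x} ↔
      frobV p K (frobV p K x) ∈ span K {x, frobV p K x} := by
  have hσx : frobV p K x ∈ span K {x, frobV p K x} := subset_span (by simp)
  simp [sigL_span, span_le, Set.image_pair, Set.pair_subset_iff, hσx]

theorem frobV_frobV_mem_span_pair_iff {x : Fin 4 → K} (hx : omegaF K x (frobV p K x) = 0) :
    frobV p K (frobV p K x) ∈ span K {x, frobV p K x} ↔
      omegaF K x (frobV p K (frobV p K x)) = 0 := by
  by_cases hdep : frobV p K x ∈ span K {x}
  · obtain ⟨c, hc⟩ := mem_span_singleton.1 hdep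
    have hσσ : frobV p K (frobV p K x) = c ^ p • frobV p K x := by
      rw [← frobV_smul, hc]
    have hω : omegaForm K x (frobV p K (frobV p K x)) = 0 := by
      rw [hσσ, map_smul, omegaForm_apply, hx, smul_zero]
    exact iff_of_true (hσσ ▸ smul_mem _ _ (subset_span (by simp))) hω
  · have hx0 : x ≠ 0 := by
      rintro rfl
      have hσ0 : frobV p K 0 = 0 := map_zero (frobVSemilinear p K)
      exact hdep (by rw [hσ0]; exact zero_mem _)
    have hli : LinearIndependent K ![x, frobV p K x] :=
      (LinearIndependent.pair_iff' hx0).2 fun c hc => hdep (mem_span_singleton.2 ⟨c, hc⟩)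
    have hω : omegaF K (frobV p K x) (frobV p K (frobV p K x)) = 0 := by
      rw [omegaF_frobV, hx, zero_pow (expChar_ne_zero K p)]
    have hmem := mem_span_pair_iff_of_isAlt (isAlt_omegaForm K) (nondegenerate_omegaForm K)
      (finrank_fin_fun K) hli hx (z := frobV p K (frobV p K x))
    rw [hmem, omegaForm_apply, omegaForm_apply, and_iff_left hω]

end Frobenius

theorem plane_sigma_stable_iff_general (p : ℕ) (K : Type) [Field K] [ExpChar K p]
    (x : Fin 4 → K) (hx : omegaF K x (frobV p K x) = 0) :
    sigL p K (span K {x, frobV p K x}) = span K {x, frobV p K x} ↔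
      omegaF K x (frobV p K (frobV p K x)) = 0 := by
  rw [sigL_eq_self_iff_le, sigL_span_pair_frobV_le_iff, frobV_frobV_mem_span_pair_iff p K hx]

/-- Let `x ∈ V` be a nonzero vector with `ω(x, σx) = 0` and
`σx ∉ 𝔽x`. Then the plane spanned by `x` and `σx` is `σ`-stable if and only if
`ω(x, σ²x) = 0`. -/
theorem plane_sigma_stable_iff
    (p : ℕ) [Fact p.Prime]
    (𝔽 : Type) [Field 𝔽] [IsAlgClosed 𝔽] [CharP 𝔽 p]
    (x : Fin 4 → 𝔽) (hx : x ≠ 0)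
    (h1 : omegaF 𝔽 x (frobV p 𝔽 x) = 0)
    (h2 : frobV p 𝔽 x ∉ Submodule.span 𝔽 ({x} : Set (Fin 4 → 𝔽))) :
    sigL p 𝔽 (Submodule.span 𝔽 ({x, frobV p 𝔽 x} : Set (Fin 4 → 𝔽))) =
        Submodule.span 𝔽 ({x, frobV p 𝔽 x} : Set (Fin 4 → 𝔽)) ↔
      omegaF 𝔽 x (frobV p 𝔽 (frobV p 𝔽 x)) = 0 :=
  plane_sigma_stable_iff_general p 𝔽 x h1

end
end
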